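/- arXiv:1803.10543 — 3 statements merged into one kernel-verified Lean document; each statement's English description precedes it below -/
import Mathlib

section
/- Let A be a worm and α an ordinal. Then: (i) A ⊢_WC h_α(A); (ii) A ⊢_WC r_α(A); (iii) for any worm B, if B ⊢_WC h_α(A) and B ⊢_WC r_α(A), then B ⊢_WC A. -/
/-!
Write `A = h ++ r` with `h` the `α`-head and `r` the `α`-remainder. Dropping a final segment of a
worm is always sound, by necessitation from `B ⊢ ⊤`; this gives `A ⊢ h`. The remainder is either
`⊤` or of the form `γ :: C` with `γ < α`. In the latter case every entry of `h` exceeds `γ`, so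
these entries can be lowered to `γ` and absorbed by transitivity, which gives `A ⊢ r`; and the
rule R3 recombines `h` and `γ :: C` into `A`.
-/

/-- A worm is a finite list of ordinals; `[]` is ⊤. -/
abbrev Worm : Type _ := List Ordinal

/-- Formulas of the closed Reflection Calculus RC⁰. -/
inductive RCFormula : Type _ where
  | top : RCFormula
  | and : RCFormula → RCFormula → RCFormula
  | dia : Ordinal → RCFormula → RCFormula

/-- The RC⁰ formula corresponding to a worm. -/
def Worm.toRC : Worm → RCFormula
  | [] => .top
  | α :: A => .dia α (Worm.toRC A)

/-- Derivability in the closed Reflection Calculus RC⁰. -/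
inductive RCDer : RCFormula → RCFormula → Prop where
  | refl (φ) : RCDer φ φ
  | top (φ) : RCDer φ .top
  | andL (φ ψ) : RCDer (.and φ ψ) φ
  | andR (φ ψ) : RCDer (.and φ ψ) ψ
  | trans_ax (α φ) : RCDer (.dia α (.dia α φ)) (.dia α φ)
  | mono_ax {α β : Ordinal} (φ) : β < α → RCDer (.dia α φ) (.dia β φ)
  | ax5 {α β : Ordinal} (φ ψ) : β < α →
      RCDer (.and (.dia α φ) (.dia β ψ)) (.dia α (.and φ (.dia β ψ)))
  | cut {φ ψ χ} : RCDer φ ψ → RCDer ψ χ → RCDer φ χ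
  | andI {φ ψ χ} : RCDer φ ψ → RCDer φ χ → RCDer φ (.and ψ χ)
  | nec {φ ψ} (α) : RCDer φ ψ → RCDer (.dia α φ) (.dia α ψ)

/-- Derivability in the Worm Calculus WC. -/
inductive WCDer : Worm → Worm → Prop where
  | top (A) : WCDer A []
  | trans_ax (α A) : WCDer (α :: α :: A) (α :: A)
  | mono_ax {α β : Ordinal} (A) : β < α → WCDer (α :: A) (β :: A)
  | cut {A B C} : WCDer A B → WCDer B C → WCDer A C
  | nec {A B} (α) : WCDer A B → WCDer (α :: A) (α :: B)
  | rule3 {A B C} (α) : WCDer A B → WCDer A (α :: C) →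
      (∀ β ∈ B, α + 1 ≤ β) → WCDer A (B ++ α :: C)

open Classical in
/-- The α-head of a worm: its longest initial segment with all entries ≥ α. -/
noncomputable def wormHead (α : Ordinal) (A : Worm) : Worm :=
  A.takeWhile (fun β => decide (α ≤ β))

open Classical in
/-- The α-remainder of a worm: what is left after removing the α-head. -/
noncomputable def wormRem (α : Ordinal) (A : Worm) : Worm :=
  A.dropWhile (fun β => decide (α ≤ β))

/-- The α-body of a worm: the tail of its (α+1)-remainder. -/
noncomputable def wormBody (α : Ordinal) (A : Worm) : Worm :=
  (wormRem (α + 1) A).tail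

/-- A Kripke model: a carrier with a relation for each ordinal. -/
structure KripkeModel : Type _ where
  W : Type _
  R : Ordinal → W → W → Prop

/-- Forcing of worms in a Kripke model. -/
def KripkeModel.forces (M : KripkeModel) : M.W → Worm → Prop
  | _, [] => True
  | x, α :: A => ∃ y, M.R α x y ∧ M.forces y A

/-- A Kripke model is Euclidean if `x R_α y` and `x R_β z` with `β < α` imply `y R_β z`. -/
def KripkeModel.Euclidean (M : KripkeModel) : Prop :=
  ∀ ⦃α β : Ordinal⦄, β < α → ∀ ⦃x y z : M.W⦄, M.R α x y → M.R β x z → M.R β y z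

/-- A Kripke model is a universal model for WC if derivability coincides with
semantic consequence on the model. -/
def KripkeModel.UniversalWC (M : KripkeModel) : Prop :=
  ∀ A B : Worm, WCDer A B ↔ ∀ x : M.W, M.forces x A → M.forces x B

/-- Reflexivity is not an axiom of WC; it follows from `⊤ ⊢ ⊤` by necessitation. -/
theorem WCDer.refl_worm (A : Worm) : WCDer A A := by
  induction A with
  | nil => exact .top _
  | cons a A ih => exact .nec a ih

theorem WCDer.append_left (A B : Worm) : WCDer (A ++ B) A := by
  induction A with
  | nil => exact .top _
  | cons a A ih => exact .nec a ih

/-- Entries above `γ` in front of `γ :: C` are lowered to `γ` and absorbed by transitivity. -/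
theorem WCDer.append_right_of_lt {γ : Ordinal} (A C : Worm) (h : ∀ a ∈ A, γ < a) :
    WCDer (A ++ γ :: C) (γ :: C) := by
  induction A with
  | nil => exact .refl_worm _
  | cons a A ih =>
    have h1 : WCDer (a :: (A ++ γ :: C)) (a :: γ :: C) :=
      .nec a (ih fun b hb => h b (List.mem_cons_of_mem _ hb))
    exact h1.cut ((WCDer.mono_ax _ (h a List.mem_cons_self)).cut (.trans_ax γ C))

theorem wormHead_append_wormRem (α : Ordinal) (A : Worm) :
    wormHead α A ++ wormRem α A = A :=
  List.takeWhile_append_dropWhile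

theorem le_of_mem_wormHead {α β : Ordinal} {A : Worm} (h : β ∈ wormHead α A) : α ≤ β := by
  simpa using List.mem_takeWhile_imp h

theorem lt_of_wormRem_eq_cons {α γ : Ordinal} {A C : Worm} (h : wormRem α A = γ :: C) :
    γ < α := by
  induction A with
  | nil => simp [wormRem] at h
  | cons a A ih =>
    by_cases ha : α ≤ a
    · exact ih (by simpa [wormRem, List.dropWhile_cons, ha] using h)
    · have : a = γ ∧ A = C := by simpa [wormRem, List.dropWhile_cons, ha] using h
      exact this.1 ▸ not_le.mp ha

theorem head_and_remainder (A : Worm) (α : Ordinal) :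
    WCDer A (wormHead α A) ∧ WCDer A (wormRem α A) ∧
    ∀ B : Worm, WCDer B (wormHead α A) → WCDer B (wormRem α A) → WCDer B A := by
  have hA := wormHead_append_wormRem α A
  refine ⟨?_, ?_, fun B hh hr => ?_⟩
  · have := WCDer.append_left (wormHead α A) (wormRem α A)
    rwa [hA] at this
  · rcases hC : wormRem α A with _ | ⟨γ, C⟩
    · exact .top _
    · have := WCDer.append_right_of_lt (wormHead α A) C
        fun a ha => (lt_of_wormRem_eq_cons hC).trans_le (le_of_mem_wormHead ha)
      rwa [← hC, hA, hC] at this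
  · rcases hC : wormRem α A with _ | ⟨γ, C⟩
    · rw [hC, List.append_nil] at hA
      rwa [hA] at hh
    · rw [hC] at hr
      have := WCDer.rule3 γ hh hr fun β hβ =>
        Order.add_one_le_of_lt ((lt_of_wormRem_eq_cons hC).trans_le (le_of_mem_wormHead hβ))
      rwa [← hC, hA] at this
end

section
/- For any worms A and B and any ordinal α: A ⊢_RC α::B if and only if both h_α(A) ⊢_RC α::h_α(B) and A ⊢_RC r_α(B). -/
open Classical in
/-- The α-head of a formula: outermost subformulas `⟨β⟩φ` with `β < α` are replaced by `⊤`. -/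
noncomputable def RCFormula.headF (α : Ordinal) : RCFormula → RCFormula
  | .top => .top
  | .and φ ψ => .and (headF α φ) (headF α ψ)
  | .dia β φ => if α ≤ β then .dia β (headF α φ) else .top

theorem toRC_wormHead (α : Ordinal) (A : Worm) :
    (wormHead α A).toRC = A.toRC.headF α := by
  induction A with
  | nil => rfl
  | cons β A ih =>
    by_cases h : α ≤ β
    · simpa [wormHead, Worm.toRC, RCFormula.headF, h] using ih
    · simp [wormHead, Worm.toRC, RCFormula.headF, h]

theorem RCDer.headF (α : Ordinal) {φ ψ : RCFormula} (h : RCDer φ ψ) :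
    RCDer (φ.headF α) (ψ.headF α) := by
  induction h with
  | refl φ => exact .refl _
  | top φ => exact .top _
  | andL φ ψ => exact .andL _ _
  | andR φ ψ => exact .andR _ _
  | trans_ax β φ =>
    by_cases h : α ≤ β
    · simpa [RCFormula.headF, h] using RCDer.trans_ax _ _
    · simpa [RCFormula.headF, h] using RCDer.top _
  | @mono_ax γ β φ hlt =>
    by_cases h : α ≤ β
    · simpa [RCFormula.headF, h, h.trans hlt.le] using RCDer.mono_ax _ hlt
    · simpa [RCFormula.headF, h] using RCDer.top _
  | @ax5 γ β φ ψ hlt =>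
    by_cases h : α ≤ β
    · simpa [RCFormula.headF, h, h.trans hlt.le] using RCDer.ax5 _ _ hlt
    · by_cases h' : α ≤ γ
      · simpa [RCFormula.headF, h, h'] using
          (RCDer.andL _ _).cut (RCDer.nec γ (RCDer.andI (.refl _) (.top _)))
      · simpa [RCFormula.headF, h'] using RCDer.top _
  | cut _ _ ih₁ ih₂ => exact ih₁.cut ih₂
  | andI _ _ ih₁ ih₂ => exact ih₁.andI ih₂
  | @nec φ ψ β _ ih =>
    by_cases h : α ≤ β
    · simpa [RCFormula.headF, h] using RCDer.nec β ih
    · simpa [RCFormula.headF, h] using RCDer.top _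

theorem RCDer.wormHead (α : Ordinal) (A : Worm) : RCDer A.toRC (wormHead α A).toRC := by
  rw [toRC_wormHead]
  induction A with
  | nil => exact .refl _
  | cons β A ih =>
    by_cases h : α ≤ β
    · simpa [Worm.toRC, RCFormula.headF, h] using RCDer.nec β ih
    · simpa [Worm.toRC, RCFormula.headF, h] using RCDer.top _

/-- `γ::B` with `γ ≥ α` derives the α-remainder of `B`.  The induction merges `γ` with the first
entry of `B`, keeping the smaller of the two, which is why `γ` is arbitrary. -/
theorem RCDer.cons_wormRem (α : Ordinal) (B : Worm) :
    ∀ γ, α ≤ γ → RCDer (Worm.toRC (γ :: B)) (wormRem α B).toRC := by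
  induction B with
  | nil => intro γ _; exact .top _
  | cons β B ih =>
    intro γ hγ
    by_cases h : α ≤ β
    · have e : wormRem α (β :: B) = wormRem α B := by simp [wormRem, h]
      rw [e]
      rcases le_total γ β with hle | hle
      · -- lower the second entry to `γ` and absorb it into the first
        have : RCDer (Worm.toRC (β :: B)) (Worm.toRC (γ :: B)) := by
          rcases hle.eq_or_lt with rfl | hlt
          · exact .refl _
          · exact .mono_ax _ hlt
        exact ((RCDer.nec γ this).cut (.trans_ax _ _)).cut (ih γ hγ)
      · -- lower the first entry to `β` and absorb it into the second
        have : RCDer (Worm.toRC (γ :: β :: B)) (Worm.toRC (β :: β :: B)) := by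
          rcases hle.eq_or_lt with rfl | hlt
          · exact .refl _
          · exact .mono_ax _ hlt
        exact (this.cut (.trans_ax _ _)).cut (ih β h)
    · have e : wormRem α (β :: B) = β :: B := by simp [wormRem, h]
      rw [e]
      exact (RCDer.mono_ax _ ((not_le.1 h).trans_le hγ)).cut (.trans_ax _ _)

/-- A conjunct starting below all entries of the worm `H` can be appended to `H`. -/
theorem RCDer.and_append {β : Ordinal} (C : Worm) (H : Worm) (hH : ∀ γ ∈ H, β < γ) :
    RCDer (.and H.toRC (Worm.toRC (β :: C))) (Worm.toRC (H ++ β :: C)) := by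
  induction H with
  | nil => exact .andR _ _
  | cons γ H ih =>
    exact (RCDer.ax5 _ _ (hH γ (by simp))).cut
      (RCDer.nec γ (ih fun δ hδ => hH δ (by simp [hδ])))

theorem RCDer.and_cons_wormRem (α : Ordinal) (B : Worm) :
    RCDer (.and (Worm.toRC (α :: _root_.wormHead α B)) (wormRem α B).toRC)
      (Worm.toRC (α :: B)) := by
  have e : _root_.wormHead α B ++ wormRem α B = B := List.takeWhile_append_dropWhile
  have hhead : ∀ γ ∈ _root_.wormHead α B, α ≤ γ := fun γ hγ => by
    simpa using List.mem_takeWhile_imp hγ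
  cases hr : wormRem α B with
  | nil =>
    rw [hr, List.append_nil] at e
    rw [e]
    exact .andL _ _
  | cons β C =>
    have hβ : β < α := by
      have := List.head?_dropWhile_not (fun β => decide (α ≤ β)) B
      unfold wormRem at hr
      simpa [hr] using this
    have key := RCDer.and_append C (α :: _root_.wormHead α B) (β := β) (by
      intro γ hγ
      rcases List.mem_cons.1 hγ with rfl | hγ
      · exact hβ
      · exact hβ.trans_le (hhead γ hγ))
    rwa [List.cons_append, ← hr, e, hr] at key

theorem recursive_worm_implication (A B : Worm) (α : Ordinal) :
    RCDer A.toRC (Worm.toRC (α :: B)) ↔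
      RCDer (wormHead α A).toRC (Worm.toRC (α :: wormHead α B)) ∧
        RCDer A.toRC (wormRem α B).toRC := by
  constructor
  · intro h
    refine ⟨?_, h.cut (RCDer.cons_wormRem α B α le_rfl)⟩
    have := h.headF α
    rw [← toRC_wormHead, ← toRC_wormHead] at this
    simpa [wormHead] using this
  · rintro ⟨h₁, h₂⟩
    exact (((RCDer.wormHead α A).cut h₁).andI h₂).cut (RCDer.and_cons_wormRem α B)
end

section
/- For any worms A and B, A ⊢_RC B if and only if A ⊢_WC B (RC is a conservative extension of WC on worms). -/
universe u

/-! ### Basic facts about WC -/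

theorem WCDer.rfl' : ∀ A : Worm.{u}, WCDer A A
  | [] => .top _
  | α :: A => .nec α (WCDer.rfl' A)

theorem WCDer.mono_le {α β : Ordinal.{u}} (A : Worm.{u}) (h : β ≤ α) :
    WCDer (α :: A) (β :: A) := by
  rcases h.eq_or_lt with rfl | h
  · exact .rfl' _
  · exact .mono_ax _ h

theorem WCDer.append_left_s16 : ∀ E R : Worm.{u}, WCDer (E ++ R) E
  | [], _ => .top _
  | α :: E, R => .nec α (WCDer.append_left_s16 E R)

/-- The worm `R` is empty or its first entry is at most `β`. -/
def HeadLE (β : Ordinal.{u}) (R : Worm.{u}) : Prop :=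
  ∀ δ ∈ R.head?, δ ≤ β

theorem WCDer.append_right {β : Ordinal.{u}} {R : Worm.{u}} (hR : HeadLE β R) :
    ∀ E : Worm.{u}, (∀ x ∈ E, β < x) → WCDer (E ++ R) R
  | [], _ => .rfl' _
  | ε :: E, hE => by
    have ih := WCDer.append_right hR E (fun x hx => hE x (List.mem_cons_of_mem _ hx))
    cases R with
    | nil => exact .top _
    | cons δ R =>
      have hδ : δ ≤ ε := (hR δ (by simp)).trans (hE ε (by simp)).le
      exact .cut (.nec ε ih) (.cut (.mono_le _ hδ) (.trans_ax _ _))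

theorem WCDer.append_intro {β : Ordinal.{u}} {X E R : Worm.{u}} (hR : HeadLE β R)
    (hE : ∀ x ∈ E, β < x) (h₁ : WCDer X E) (h₂ : WCDer X R) : WCDer X (E ++ R) := by
  cases R with
  | nil => simpa using h₁
  | cons δ R =>
    refine .rule3 δ h₁ h₂ (fun x hx => ?_)
    exact Order.add_one_le_of_lt ((hR δ (by simp)).trans_lt (hE x hx))

theorem exists_split (β : Ordinal.{u}) :
    ∀ A : Worm.{u}, ∃ E R : Worm.{u}, A = E ++ R ∧ (∀ x ∈ E, β < x) ∧ HeadLE β R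
  | [] => ⟨[], [], rfl, by simp, by simp [HeadLE]⟩
  | a :: A => by
    by_cases h : β < a
    · obtain ⟨E, R, rfl, hE, hR⟩ := exists_split β A
      refine ⟨a :: E, R, rfl, ?_, hR⟩
      simpa using ⟨h, hE⟩
    · exact ⟨[], a :: A, rfl, by simp, by simpa [HeadLE] using h⟩

theorem exists_min_entry (A B : Worm.{u}) (h : A ++ B ≠ []) :
    ∃ μ ∈ A ++ B, ∀ x ∈ A ++ B, μ ≤ x := by
  obtain ⟨a, ha⟩ := List.exists_mem_of_ne_nil _ h
  obtain ⟨μ, hμ, hmin⟩ := wellFounded_lt.has_min {x | x ∈ A ++ B} ⟨a, ha⟩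
  exact ⟨μ, hμ, fun x hx => not_lt.1 (hmin x hx)⟩

/-- Simultaneous split of two worms at their least entry `μ`. As `μ` occurs in one of them, the
parts `E`, `F` above `μ` have strictly smaller total length. -/
theorem exists_split_min (A B : Worm.{u}) (h : A ++ B ≠ []) :
    ∃ (μ : Ordinal.{u}) (E R F S : Worm.{u}), A = E ++ R ∧ B = F ++ S ∧ μ ∈ A ++ B ∧
      (∀ x ∈ A, μ ≤ x) ∧ (∀ x ∈ B, μ ≤ x) ∧
      (∀ x ∈ E, μ < x) ∧ (∀ x ∈ F, μ < x) ∧ HeadLE μ R ∧ HeadLE μ S ∧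
      E.length + F.length < A.length + B.length := by
  obtain ⟨μ, hμ, hmin⟩ := exists_min_entry A B h
  obtain ⟨E, R, rfl, hE, hR⟩ := exists_split μ A
  obtain ⟨F, S, rfl, hF, hS⟩ := exists_split μ B
  refine ⟨μ, E, R, F, S, rfl, rfl, hμ, fun x hx => hmin x (List.mem_append_left _ hx),
    fun x hx => hmin x (List.mem_append_right _ hx), hE, hF, hR, hS, ?_⟩
  have hne : R ≠ [] ∨ S ≠ [] := by
    by_contra! hc
    obtain ⟨rfl, rfl⟩ := hc
    simp only [List.append_nil, List.mem_append] at hμ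
    rcases hμ with hμ | hμ
    · exact lt_irrefl _ (hE μ hμ)
    · exact lt_irrefl _ (hF μ hμ)
  rcases hne with hne | hne <;> have := List.length_pos_iff.2 hne <;>
    simp only [List.length_append] <;> omega

/-- A remainder at a lower bound `μ` of the entries is empty or begins with `μ` itself. -/
theorem HeadLE.eq_nil_or_cons {μ : Ordinal.{u}} {R : Worm.{u}} (hR : HeadLE μ R)
    (h : ∀ x ∈ R, μ ≤ x) : R = [] ∨ ∃ R', R = μ :: R' := by
  cases R with
  | nil => exact .inl rfl
  | cons δ R =>
    have : δ = μ := le_antisymm (hR δ (by simp)) (h δ (by simp))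
    exact .inr ⟨R, by rw [this]⟩

/-! ### Trichotomy -/

theorem trichotomy_aux (n : ℕ) : ∀ (α : Ordinal.{u}) (A B : Worm.{u}),
    A.length + B.length < n → (∀ x ∈ A, α ≤ x) → (∀ x ∈ B, α ≤ x) →
    WCDer A (α :: B) ∨ WCDer B (α :: A) ∨ (WCDer A B ∧ WCDer B A) := by
  induction n with
  | zero => intro _ _ _ h; omega
  | succ n ih =>
    intro α A B hn hA hB
    by_cases hne : A ++ B = []
    · obtain ⟨rfl, rfl⟩ := List.append_eq_nil_iff.1 hne
      exact .inr (.inr ⟨.top _, .top _⟩)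
    obtain ⟨μ, E, R, F, S, hAE, hBF, hμ, hμA, hμB, hE, hF, hR, hS, hlen⟩ :=
      exists_split_min A B hne
    have hαμ : α ≤ μ := by
      rcases List.mem_append.1 hμ with h | h
      · exact hA μ h
      · exact hB μ h
    -- The trichotomy at `μ` implies the one at `α ≤ μ`.
    suffices H : WCDer A (μ :: B) ∨ WCDer B (μ :: A) ∨ (WCDer A B ∧ WCDer B A) by
      rcases H with h | h | h
      · exact .inl (h.cut (.mono_le _ hαμ))
      · exact .inr (.inl (h.cut (.mono_le _ hαμ)))
      · exact .inr (.inr h)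
    have hAE' : WCDer A E := hAE ▸ WCDer.append_left_s16 E R
    have hBF' : WCDer B F := hBF ▸ WCDer.append_left_s16 F S
    have hAR : WCDer A R := hAE ▸ WCDer.append_right hR E hE
    have hBS : WCDer B S := hBF ▸ WCDer.append_right hS F hF
    -- If `S = μ :: S'`, compare `A` with the shorter worm `S'`: either `A` derives `S`, or `S'` derives
    -- `A` or `μ :: A`, and then `B`, which derives `S`, derives `μ :: A`.
    have hAS : WCDer A S ∨ WCDer B (μ :: A) := by
      rcases hS.eq_nil_or_cons (fun x hx => hμB x (by simp [hBF, hx])) with h | ⟨S', h⟩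
      · exact .inl (h ▸ .top _)
      · subst h
        rcases ih μ A S' (by simp only [hBF, List.length_append, List.length_cons] at hn; omega) hμA
          (fun x hx => hμB x (by simp [hBF, hx])) with h | h | h
        · exact .inl h
        · exact .inr (hBS.cut ((WCDer.nec μ h).cut (.trans_ax _ _)))
        · exact .inr (hBS.cut (.nec μ h.2))
    have hBR : WCDer B R ∨ WCDer A (μ :: B) := by
      rcases hR.eq_nil_or_cons (fun x hx => hμA x (by simp [hAE, hx])) with h | ⟨R', h⟩
      · exact .inl (h ▸ .top _)
      · subst h
        rcases ih μ B R' (by simp only [hAE, List.length_append, List.length_cons] at hn; omega) hμB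
          (fun x hx => hμA x (by simp [hAE, hx])) with h | h | h
        · exact .inl h
        · exact .inr (hAR.cut ((WCDer.nec μ h).cut (.trans_ax _ _)))
        · exact .inr (hAR.cut (.nec μ h.2))
    rcases hAS with hAS | h
    swap
    · exact .inr (.inl h)
    rcases hBR with hBR | h
    swap
    · exact .inl h
    have hμs : μ < μ + 1 := lt_add_one μ
    rcases ih (μ + 1) E F (by omega) (fun x hx => Order.add_one_le_of_lt (hE x hx))
      (fun x hx => Order.add_one_le_of_lt (hF x hx)) with h | h | h
    · left
      have : WCDer A (((μ + 1) :: F) ++ S) :=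
        WCDer.append_intro hS (by simpa using hF) (hAE'.cut h) hAS
      rw [hBF]
      exact this.cut (.mono_ax _ hμs)
    · right; left
      have : WCDer B (((μ + 1) :: E) ++ R) :=
        WCDer.append_intro hR (by simpa using hE) (hBF'.cut h) hBR
      rw [hAE]
      exact this.cut (.mono_ax _ hμs)
    · right; right
      constructor
      · have := WCDer.append_intro hS hF (hAE'.cut h.1) hAS
        rwa [← hBF] at this
      · have := WCDer.append_intro hR hE (hBF'.cut h.2) hBR
        rwa [← hAE] at this

theorem trichotomy (α : Ordinal.{u}) (A B : Worm.{u}) (hA : ∀ x ∈ A, α ≤ x)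
    (hB : ∀ x ∈ B, α ≤ x) :
    WCDer A (α :: B) ∨ WCDer B (α :: A) ∨ (WCDer A B ∧ WCDer B A) :=
  trichotomy_aux _ α A B (Nat.lt_succ_self _) hA hB

theorem remainder_total {μ : Ordinal.{u}} {R S : Worm.{u}} (hR : HeadLE μ R) (hS : HeadLE μ S)
    (hμR : ∀ x ∈ R, μ ≤ x) (hμS : ∀ x ∈ S, μ ≤ x) : WCDer R S ∨ WCDer S R := by
  rcases hR.eq_nil_or_cons hμR with rfl | ⟨R, rfl⟩
  · exact .inr (.top _)
  rcases hS.eq_nil_or_cons hμS with rfl | ⟨S, rfl⟩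
  · exact .inl (.top _)
  rcases trichotomy μ R S (fun x hx => hμR x (by simp [hx])) (fun x hx => hμS x (by simp [hx]))
    with h | h | h
  · exact .inl ((WCDer.nec μ h).cut (.trans_ax _ _))
  · exact .inr ((WCDer.nec μ h).cut (.trans_ax _ _))
  · exact .inl (.nec μ h.1)

/-! ### Greatest lower bounds -/

/-- `C` is a greatest lower bound of `A` and `B` in the preorder of WC-derivability. -/
def IsWormGLB (A B C : Worm.{u}) : Prop :=
  WCDer C A ∧ WCDer C B ∧ ∀ X, WCDer X A → WCDer X B → WCDer X C

theorem HeadLE.left {β : Ordinal.{u}} {E R : Worm.{u}} (h : HeadLE β (E ++ R)) : HeadLE β E := by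
  cases E with
  | nil => simp [HeadLE]
  | cons a E => simpa [HeadLE] using h

theorem IsWormGLB.append {μ : Ordinal.{u}} {E R F S G T : Worm.{u}} (hG : IsWormGLB E F G)
    (hT : IsWormGLB R S T) (hE : ∀ x ∈ E, μ < x) (hF : ∀ x ∈ F, μ < x) (hGμ : ∀ x ∈ G, μ < x)
    (hR : HeadLE μ R) (hS : HeadLE μ S) (hTμ : HeadLE μ T) :
    IsWormGLB (E ++ R) (F ++ S) (G ++ T) := by
  have h₁ := WCDer.append_left_s16 G T
  have h₂ := WCDer.append_right hTμ G hGμ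
  refine ⟨.append_intro hR hE (h₁.cut hG.1) (h₂.cut hT.1),
    .append_intro hS hF (h₁.cut hG.2.1) (h₂.cut hT.2.1), fun X hA hB => ?_⟩
  exact .append_intro hTμ hGμ
    (hG.2.2 X (hA.cut (.append_left E R)) (hB.cut (.append_left F S)))
    (hT.2.2 X (hA.cut (.append_right hR E hE)) (hB.cut (.append_right hS F hF)))

/-- Greatest lower bounds exist. The bound can be chosen among the worms whose entries exceed every
strict lower bound on the entries of `A` and `B`, and whose first entry is at most any common upper
bound on the first entries of `A` and `B`. -/
theorem exists_glb_aux (n : ℕ) : ∀ A B : Worm.{u}, A.length + B.length < n →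
    ∃ C, IsWormGLB A B C ∧ (∀ ν, (∀ x ∈ A, ν < x) → (∀ x ∈ B, ν < x) → ∀ x ∈ C, ν < x) ∧
      ∀ β, HeadLE β A → HeadLE β B → HeadLE β C := by
  induction n with
  | zero => intro _ _ h; omega
  | succ n ih =>
    intro A B hn
    by_cases hne : A ++ B = []
    · obtain ⟨rfl, rfl⟩ := List.append_eq_nil_iff.1 hne
      exact ⟨[], ⟨.top _, .top _, fun X _ _ => .top _⟩, fun _ h _ => h, fun _ h _ => h⟩
    obtain ⟨μ, E, R, F, S, rfl, rfl, hμ, hμA, hμB, hE, hF, hR, hS, hlen⟩ :=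
      exists_split_min A B hne
    obtain ⟨G, hG, hGlow, hGhead⟩ := ih E F (by omega)
    have hGμ := hGlow μ hE hF
    -- The remainders `R` and `S` are comparable, so one of them is their greatest lower bound.
    obtain ⟨T, hT, hTRS⟩ : ∃ T, IsWormGLB R S T ∧ (T = R ∨ T = S) := by
      rcases remainder_total hR hS (fun x hx => hμA x (by simp [hx]))
        (fun x hx => hμB x (by simp [hx])) with h | h
      · exact ⟨R, ⟨.rfl' _, h, fun _ h _ => h⟩, .inl rfl⟩
      · exact ⟨S, ⟨h, .rfl' _, fun _ _ h => h⟩, .inr rfl⟩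
    have hTμ : HeadLE μ T := by rcases hTRS with rfl | rfl <;> assumption
    refine ⟨G ++ T, hG.append hT hE hF hGμ hR hS hTμ, ?_, ?_⟩
    · intro ν hA hB x hx
      rcases List.mem_append.1 hx with hx | hx
      · exact hGlow ν (fun x hx => hA x (by simp [hx])) (fun x hx => hB x (by simp [hx])) x hx
      · rcases hTRS with rfl | rfl
        · exact hA x (by simp [hx])
        · exact hB x (by simp [hx])
    · intro β hA hB
      have hGβ := hGhead β hA.left hB.left
      cases G with
      | cons g G => simpa [HeadLE] using hGβ
      | nil =>
        -- The first entry of `T` is at most `μ`, and `μ` is at most the first entry of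
        -- whichever of the two worms is nonempty.
        have hμβ : μ ≤ β := by
          rcases hAR : E ++ R with _ | ⟨a, A'⟩
          · rcases hBS : F ++ S with _ | ⟨b, B'⟩
            · simp [hAR, hBS] at hne
            · exact (hμB b (by simp [hBS])).trans (hB b (by simp [hBS]))
          · exact (hμA a (by simp [hAR])).trans (hA a (by simp [hAR]))
        exact fun δ hδ => (hTμ δ hδ).trans hμβ

theorem exists_glb (A B : Worm.{u}) :
    ∃ C, IsWormGLB A B C ∧ ∀ β, HeadLE β A → HeadLE β B → HeadLE β C := by
  obtain ⟨C, h, -, hhead⟩ := exists_glb_aux _ A B (Nat.lt_succ_self _)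
  exact ⟨C, h, hhead⟩

/-! ### Interpretation of RC in WC -/

/-- The worm interpreting an RC formula: conjunction is read as a chosen greatest lower bound with
respect to WC-derivability. The ordinals in RC formulas live in the lowest universe. -/
noncomputable def RCFormula.interp : RCFormula → Worm.{0}
  | .top => []
  | .and φ ψ => (exists_glb φ.interp ψ.interp).choose
  | .dia α φ => α :: φ.interp

theorem RCFormula.interp_and (φ ψ : RCFormula) :
    IsWormGLB φ.interp ψ.interp (RCFormula.and φ ψ).interp :=
  (exists_glb φ.interp ψ.interp).choose_spec.1

theorem Worm.interp_toRC : ∀ A : Worm.{0}, (Worm.toRC A).interp = A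
  | [] => rfl
  | α :: A => congrArg (α :: ·) (Worm.interp_toRC A)

/-- The axiom `ax5` of RC, read in WC with conjunctions as greatest lower bounds. -/
theorem WCDer.ax5 {α β : Ordinal.{0}} {A B X D : Worm.{0}} (h : β < α) (hA : WCDer X (α :: A))
    (hB : WCDer X (β :: B)) (hD : IsWormGLB A (β :: B) D) : WCDer X (α :: D) := by
  obtain ⟨E, R, rfl, hE, hR⟩ := exists_split β A
  obtain ⟨S, hS, hShead⟩ := exists_glb R (β :: B)
  have hSβ : HeadLE β S := hShead β hR (by simp [HeadLE])
  have hαE : ∀ x ∈ α :: E, β < x := by simpa using ⟨h, hE⟩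
  have hXR : WCDer X R := hA.cut (.append_right hR (α :: E) hαE)
  have hXE : WCDer X (α :: E) := hA.cut (.nec α (.append_left E R))
  have hXS : WCDer X (α :: E ++ S) := .append_intro hSβ hαE hXE (hS.2.2 X hXR hB)
  have hES := WCDer.append_right hSβ E hE
  refine hXS.cut (.nec α (hD.2.2 _ ?_ (hES.cut hS.2.1)))
  exact .append_intro hR hE (.append_left E S) (hES.cut hS.1)

theorem RCDer.interp {φ ψ : RCFormula} (h : RCDer φ ψ) : WCDer φ.interp ψ.interp := by
  induction h with
  | refl φ => exact .rfl' _
  | top φ => exact .top _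
  | andL φ ψ => exact (φ.interp_and ψ).1
  | andR φ ψ => exact (φ.interp_and ψ).2.1
  | trans_ax α φ => exact .trans_ax _ _
  | mono_ax φ h => exact .mono_ax _ h
  | @ax5 α β φ ψ h =>
    have hc := (RCFormula.dia α φ).interp_and (.dia β ψ)
    exact .ax5 h hc.1 hc.2.1 (φ.interp_and (.dia β ψ))
  | cut _ _ ih₁ ih₂ => exact ih₁.cut ih₂
  | andI _ _ ih₁ ih₂ => exact (RCFormula.interp_and _ _).2.2 _ ih₁ ih₂
  | nec α _ ih => exact .nec α ih

/-! ### Soundness of WC in RC -/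

theorem RCDer.append {α : Ordinal.{0}} (C : Worm.{0}) : ∀ B : Worm.{0}, (∀ x ∈ B, α < x) →
    RCDer (.and (Worm.toRC B) (Worm.toRC (α :: C))) (Worm.toRC (B ++ α :: C))
  | [], _ => .andR _ _
  | b :: B, h =>
    .cut (.ax5 _ _ (h b (by simp)))
      (.nec b (RCDer.append C B (fun x hx => h x (List.mem_cons_of_mem _ hx))))

theorem WCDer.toRC {A B : Worm.{0}} (h : WCDer A B) : RCDer (Worm.toRC A) (Worm.toRC B) := by
  induction h with
  | top A => exact .top _
  | trans_ax α A => exact .trans_ax _ _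
  | mono_ax A h => exact .mono_ax _ h
  | cut _ _ ih₁ ih₂ => exact ih₁.cut ih₂
  | nec α _ ih => exact .nec α ih
  | rule3 α _ _ hB ih₁ ih₂ =>
    exact (RCDer.andI ih₁ ih₂).cut (.append _ _ (fun x hx => Order.add_one_le_iff.1 (hB x hx)))

theorem RC_conservative_over_WC (A B : Worm) :
    RCDer A.toRC B.toRC ↔ WCDer A B := by
  refine ⟨fun h => ?_, WCDer.toRC⟩
  simpa only [Worm.interp_toRC] using h.interp
end
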